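/- Let h, Ω, μ ∈ ℝ with −μ > h − Ω > 0 (subsubcritical anisotropy). Then there exist nonconstant C² solutions of the pendulum equation θ″ = sin θ (h − Ω − μ cos θ) as follows: a strictly increasing solution θa : ℝ → ℝ with lim_{ξ→−∞} θa(ξ) = 0 and lim_{ξ→+∞} θa(ξ) = 2π (on the circle, a homoclinic profile to ê₃ crossing −ê₃); and a nonconstant solution θb : ℝ → ℝ with θb(ξ) ∈ (π, 2π) for all ξ and lim_{ξ→±∞} θb(ξ) = π (a homoclinic profile to −ê₃ not crossing ê₃). -/

import Mathlib

/-!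
Write `a = h - Ω` and `ν = -μ`, so that `0 < a < ν` and the equation is `θ'' = sin θ (a + ν cos θ)`.
Both homoclinic orbits are explicit. On the separatrix energy levels the tangent `u` of the half
angle (measured from a suitable equilibrium) satisfies `u'' = q u` and `u'² = p + q u²`, whose
solutions are hyperbolic functions:

* `θa = π + 2 arctan (A sinh (k ξ))` with `k² = a + ν`, `A² k² = a`, i.e. `p = a`, `q = a + ν`;
* `θb = 2π - 2 arctan (B cosh (k ξ))` with `k² = ν - a`, `B² k² = a`, i.e. `p = -a`, `q = ν - a`.

The lemma `deriv_deriv_two_arctan` shows that `φ = 2 arctan u` then solves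
`φ'' = sin φ ((q - p) cos φ - p)`, and the shift by `π` or the reflection `φ ↦ 2π - φ` turns this
into the pendulum equation. Monotonicity, range and limits are read off from the formulas.
-/

lemma sin_two_arctan (u : ℝ) : Real.sin (2 * Real.arctan u) = 2 * u / (1 + u ^ 2) := by
  have hu : (0 : ℝ) < 1 + u ^ 2 := by positivity
  rw [Real.sin_two_mul, Real.sin_arctan, Real.cos_arctan]
  have hs := Real.sq_sqrt hu.le
  have hs0 := (Real.sqrt_pos.2 hu).ne'
  field_simp
  rw [hs]

lemma cos_two_arctan (u : ℝ) :
    Real.cos (2 * Real.arctan u) = (1 - u ^ 2) / (1 + u ^ 2) := by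
  have hu : (0 : ℝ) < 1 + u ^ 2 := by positivity
  rw [Real.cos_two_mul, Real.cos_sq_arctan]
  field_simp
  ring

/-- If `u'' = q u` with first integral `u'² = p + q u²`, then `φ = 2 arctan u` solves the pendulum
equation `φ'' = sin φ ((q - p) cos φ - p)`. The sign `s` and the offset `c` allow for the
shift and the reflection of `φ`. -/
lemma deriv_deriv_two_arctan {u v : ℝ → ℝ} {p q : ℝ} (c s : ℝ)
    (hu : ∀ x, HasDerivAt u (v x) x) (hv : ∀ x, HasDerivAt v (q * u x) x)
    (huv : ∀ x, v x ^ 2 = p + q * u x ^ 2) (x : ℝ) :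
    deriv (deriv fun y => c + s * (2 * Real.arctan (u y))) x =
      s * (Real.sin (2 * Real.arctan (u x)) *
        ((q - p) * Real.cos (2 * Real.arctan (u x)) - p)) := by
  have hd : (deriv fun y => c + s * (2 * Real.arctan (u y))) =
      fun y => s * (2 * (v y / (1 + u y ^ 2))) := by
    funext y
    have := ((((hu y).arctan).const_mul 2).const_mul s).const_add c
    rw [this.deriv]
    ring
  have hne : 1 + u x ^ 2 ≠ 0 := by positivity
  have h2 := ((((hv x).div (((hu x).pow 2).const_add 1) hne).const_mul 2).const_mul s)
  rw [hd]
  refine (HasDerivAt.deriv h2).trans ?_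
  rw [sin_two_arctan, cos_two_arctan]
  have := huv x
  simp only [Pi.pow_apply, Nat.cast_ofNat]
  field_simp
  linear_combination (-2 * s * u x) * this

theorem stmt10 (h Ω μ : ℝ) (h1 : 0 < h - Ω) (h2 : h - Ω < -μ) :
    -- a homoclinic profile to `ê₃` crossing `−ê₃` (increasing from 0 to 2π)
    (∃ θa : ℝ → ℝ, ContDiff ℝ 2 θa ∧ StrictMono θa ∧
        (∀ ξ : ℝ, deriv (deriv θa) ξ = Real.sin (θa ξ) * (h - Ω - μ * Real.cos (θa ξ))) ∧
        Filter.Tendsto θa Filter.atBot (nhds 0) ∧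
        Filter.Tendsto θa Filter.atTop (nhds (2 * Real.pi))) ∧
    -- a homoclinic profile to `−ê₃` not crossing `ê₃`
    (∃ θb : ℝ → ℝ, ContDiff ℝ 2 θb ∧ (∃ ξ₁ ξ₂ : ℝ, θb ξ₁ ≠ θb ξ₂) ∧
        (∀ ξ : ℝ, deriv (deriv θb) ξ = Real.sin (θb ξ) * (h - Ω - μ * Real.cos (θb ξ))) ∧
        (∀ ξ : ℝ, θb ξ ∈ Set.Ioo Real.pi (2 * Real.pi)) ∧
        Filter.Tendsto θb Filter.atBot (nhds Real.pi) ∧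
        Filter.Tendsto θb Filter.atTop (nhds Real.pi)) := by
  set a := h - Ω with ha
  refine ⟨?_, ?_⟩
  · obtain ⟨k, hk, hk2⟩ : ∃ k : ℝ, 0 < k ∧ k ^ 2 = a - μ :=
      ⟨√(a - μ), Real.sqrt_pos.2 (by linarith), Real.sq_sqrt (by linarith)⟩
    obtain ⟨A, hA, hA2⟩ : ∃ A : ℝ, 0 < A ∧ A ^ 2 * k ^ 2 = a := by
      refine ⟨√a / k, div_pos (Real.sqrt_pos.2 h1) hk, ?_⟩
      rw [div_pow, Real.sq_sqrt h1.le]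
      field_simp
    have hu : ∀ x, HasDerivAt (fun y => A * Real.sinh (k * y)) (A * k * Real.cosh (k * x)) x := by
      intro x
      refine ((((hasDerivAt_id' x).const_mul k).sinh).const_mul A).congr_deriv ?_
      ring
    have hv : ∀ x, HasDerivAt (fun y => A * k * Real.cosh (k * y))
        ((a - μ) * (A * Real.sinh (k * x))) x := by
      intro x
      refine ((((hasDerivAt_id' x).const_mul k).cosh).const_mul (A * k)).congr_deriv ?_
      rw [← hk2]
      ring
    have huv : ∀ x, (A * k * Real.cosh (k * x)) ^ 2 =
        a + (a - μ) * (A * Real.sinh (k * x)) ^ 2 := by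
      intro x
      rw [← hk2, mul_pow, Real.cosh_sq]
      linear_combination hA2
    have htop : Filter.Tendsto (fun y => A * Real.sinh (k * y)) Filter.atTop Filter.atTop :=
      (Real.sinhOrderIso.tendsto_atTop.comp
        (Filter.tendsto_id.const_mul_atTop hk)).const_mul_atTop hA
    have hbot : Filter.Tendsto (fun y => A * Real.sinh (k * y)) Filter.atBot Filter.atBot :=
      (Real.sinhOrderIso.tendsto_atBot.comp
        (Filter.tendsto_id.const_mul_atBot hk)).const_mul_atBot hA
    refine ⟨fun y => Real.pi + 1 * (2 * Real.arctan (A * Real.sinh (k * y))), ?_, ?_, ?_, ?_, ?_⟩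
    · exact contDiff_const.add (contDiff_const.mul (contDiff_const.mul
        (Real.contDiff_arctan.comp
          (contDiff_const.mul (Real.contDiff_sinh.comp (contDiff_const.mul contDiff_id))))))
    · intro x y hxy
      have : A * Real.sinh (k * x) < A * Real.sinh (k * y) :=
        mul_lt_mul_of_pos_left (Real.sinh_lt_sinh.2 (mul_lt_mul_of_pos_left hxy hk)) hA
      have := Real.arctan_strictMono this
      simp only
      linarith
    · intro x
      rw [deriv_deriv_two_arctan Real.pi 1 hu hv huv x]
      simp only [one_mul]
      rw [add_comm Real.pi, Real.sin_add_pi, Real.cos_add_pi]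
      ring
    · have := (((Real.tendsto_arctan_atBot.mono_right nhdsWithin_le_nhds).comp hbot).const_mul
        2).const_mul 1 |>.const_add Real.pi
      convert this using 1
      congr 1
      ring_nf
    · have := (((Real.tendsto_arctan_atTop.mono_right nhdsWithin_le_nhds).comp htop).const_mul
        2).const_mul 1 |>.const_add Real.pi
      convert this using 1
      congr 1
      ring_nf
  · obtain ⟨k, hk, hk2⟩ : ∃ k : ℝ, 0 < k ∧ k ^ 2 = -μ - a :=
      ⟨√(-μ - a), Real.sqrt_pos.2 (by linarith), Real.sq_sqrt (by linarith)⟩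
    obtain ⟨B, hB, hB2⟩ : ∃ B : ℝ, 0 < B ∧ B ^ 2 * k ^ 2 = a := by
      refine ⟨√a / k, div_pos (Real.sqrt_pos.2 h1) hk, ?_⟩
      rw [div_pow, Real.sq_sqrt h1.le]
      field_simp
    have hu : ∀ x, HasDerivAt (fun y => B * Real.cosh (k * y)) (B * k * Real.sinh (k * x)) x := by
      intro x
      refine ((((hasDerivAt_id' x).const_mul k).cosh).const_mul B).congr_deriv ?_
      ring
    have hv : ∀ x, HasDerivAt (fun y => B * k * Real.sinh (k * y))
        ((-μ - a) * (B * Real.cosh (k * x))) x := by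
      intro x
      refine ((((hasDerivAt_id' x).const_mul k).sinh).const_mul (B * k)).congr_deriv ?_
      rw [← hk2]
      ring
    have huv : ∀ x, (B * k * Real.sinh (k * x)) ^ 2 =
        -a + (-μ - a) * (B * Real.cosh (k * x)) ^ 2 := by
      intro x
      rw [← hk2, mul_pow B (Real.cosh _), Real.cosh_sq]
      linear_combination -hB2
    have hcosh : Filter.Tendsto Real.cosh Filter.atTop Filter.atTop :=
      Filter.tendsto_atTop_mono (fun x => (Real.sinh_lt_cosh x).le)
        Real.sinhOrderIso.tendsto_atTop
    have htop : Filter.Tendsto (fun y => B * Real.cosh (k * y)) Filter.atTop Filter.atTop :=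
      (hcosh.comp (Filter.tendsto_id.const_mul_atTop hk)).const_mul_atTop hB
    have hbot : Filter.Tendsto (fun y => B * Real.cosh (k * y)) Filter.atBot Filter.atTop := by
      convert htop.comp Filter.tendsto_neg_atBot_atTop using 2 with y
      simp
    have hlim : ∀ l : Filter ℝ,
        Filter.Tendsto (fun y => B * Real.cosh (k * y)) l Filter.atTop →
        Filter.Tendsto (fun y => 2 * Real.pi + -1 * (2 * Real.arctan (B * Real.cosh (k * y)))) l
          (nhds Real.pi) := by
      intro l hl
      have := (((Real.tendsto_arctan_atTop.mono_right nhdsWithin_le_nhds).comp hl).const_mul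
        2).const_mul (-1) |>.const_add (2 * Real.pi)
      convert this using 1
      congr 1
      ring_nf
    refine ⟨fun y => 2 * Real.pi + -1 * (2 * Real.arctan (B * Real.cosh (k * y))),
      ?_, ⟨0, 1, ?_⟩, ?_, ?_, hlim _ hbot, hlim _ htop⟩
    · exact contDiff_const.add (contDiff_const.mul (contDiff_const.mul
        (Real.contDiff_arctan.comp
          (contDiff_const.mul (Real.contDiff_cosh.comp (contDiff_const.mul contDiff_id))))))
    · intro heq
      have h01 : B * Real.cosh (k * 0) < B * Real.cosh (k * 1) := by
        apply mul_lt_mul_of_pos_left _ hB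
        simpa using hk.ne'
      have := Real.arctan_strictMono h01
      simp only at heq
      linarith
    · intro x
      rw [deriv_deriv_two_arctan (2 * Real.pi) (-1) hu hv huv x]
      simp only [neg_one_mul, ← sub_eq_add_neg]
      rw [Real.sin_two_pi_sub, Real.cos_two_pi_sub]
      ring
    · intro x
      have hpos : 0 < Real.arctan (B * Real.cosh (k * x)) :=
        Real.arctan_pos.2 (mul_pos hB (Real.cosh_pos _))
      have := Real.arctan_lt_pi_div_two (B * Real.cosh (k * x))
      constructor <;> linarith
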